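/- Let p > 1 be a real number, let ε ∈ {−1, 0, 1}, set A = 1 − ε/p, and let y be a real number with |py| < 1. Then the series 1 + p²y²·A·(A + 2/p) + Σ_{k=2}^∞ A·p^{2k}·y^{2k}·[A + (2A/p)·(1 − p^{1−k})/(1 − p⁻¹) + 2/p^k] converges and its sum equals P(y,ε) = (1 + (ε² − 2ε + p − 2εp)y² + ε²py⁴)/((1 − py²)(1 − p²y²)). -/

import Mathlib

/-- `P(y, ε) = (1 + (ε² − 2ε + p − 2εp)y² + ε²py⁴)/((1 − py²)(1 − p²y²))`. -/
noncomputable def Pp (p y ε : ℝ) : ℝ :=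
  (1 + (ε ^ 2 - 2 * ε + p - 2 * ε * p) * y ^ 2 + ε ^ 2 * p * y ^ 4) /
    ((1 - p * y ^ 2) * (1 - p ^ 2 * y ^ 2))

/-!
Summing the inner geometric progression `(1 - p^(1 - k)) / (1 - p⁻¹)` turns the `k`-th term of the
series into a combination of `(p² y²)^k` and `(p y²)^k` with coefficients independent of `k`.  Both
ratios are less than `1` in absolute value, and adding the two geometric tails to the terms of
degree at most `2` in `y` reverses the partial fraction expansion of `P(y, ε)` in `y²`.
-/

section Field

variable {K : Type*} [Field K] {p : K}

/-- The `k`-th term of the series as a function of `p`, `y` and `A = 1 - ε / p`; the exponent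
`1 - k` is an integer, since it is negative for `k ≥ 2`. -/
def seriesTerm (p y A : K) (k : ℕ) : K :=
  A * p ^ (2 * k) * y ^ (2 * k) *
    (A + 2 * A / p * ((1 - p ^ ((1 : ℤ) - k)) / (1 - p⁻¹)) + 2 / p ^ k)

theorem seriesTerm_eq_add_pow (hp0 : p ≠ 0) (hp1 : p ≠ 1) (y A : K) (k : ℕ) :
    seriesTerm p y A k =
      A ^ 2 * (p + 1) / (p - 1) * ((p * y) ^ 2) ^ k +
        2 * A * (p - 1 - p * A) / (p - 1) * (p * y ^ 2) ^ k := by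
  have hinv : 1 - p⁻¹ = (p - 1) / p := by field_simp
  have hbracket : A + 2 * A / p * ((1 - p ^ ((1 : ℤ) - k)) / (1 - p⁻¹)) + 2 / p ^ k =
      A * (p + 1) / (p - 1) + 2 * (p - 1 - p * A) / (p - 1) / p ^ k := by
    rw [hinv, zpow_sub₀ hp0, zpow_one, zpow_natCast]
    field_simp
    ring
  have hpow : p ^ (2 * k) * y ^ (2 * k) / p ^ k = (p * y ^ 2) ^ k := by
    rw [pow_mul, pow_mul, ← mul_pow, ← div_pow]
    congr 1
    field_simp
  rw [seriesTerm, hbracket, ← hpow]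
  ring

theorem one_add_geometric_tails_eq (hp0 : p ≠ 0) (hp1 : p ≠ 1) (ε : K) {y : K}
    (hX : (p * y) ^ 2 ≠ 1) (hY : p * y ^ 2 ≠ 1) :
    1 + p ^ 2 * y ^ 2 * (1 - ε / p) * ((1 - ε / p) + 2 / p) +
        ((1 - ε / p) ^ 2 * (p + 1) / (p - 1) * (((p * y) ^ 2) ^ 2 / (1 - (p * y) ^ 2)) +
          2 * (1 - ε / p) * (p - 1 - p * (1 - ε / p)) / (p - 1) *
            ((p * y ^ 2) ^ 2 / (1 - p * y ^ 2))) =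
      (1 + (ε ^ 2 - 2 * ε + p - 2 * ε * p) * y ^ 2 + ε ^ 2 * p * y ^ 4) /
        ((1 - p * y ^ 2) * (1 - p ^ 2 * y ^ 2)) := by
  have hX' : 1 - p ^ 2 * y ^ 2 ≠ 0 := by rwa [← mul_pow, sub_ne_zero, ne_comm]
  have hY' : 1 - p * y ^ 2 ≠ 0 := sub_ne_zero.2 hY.symm
  rw [mul_pow p y 2]
  field_simp
  ring

end Field

section NormedDivisionRing

variable {K : Type*} [NormedDivisionRing K]

theorem hasSum_pow_add_of_norm_lt_one {r : K} (hr : ‖r‖ < 1) (m : ℕ) :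
    HasSum (fun k : ℕ => r ^ (k + m)) (r ^ m / (1 - r)) := by
  simpa only [← pow_add, add_comm m, div_eq_mul_inv] using
    (hasSum_geometric_of_norm_lt_one hr).mul_left (r ^ m)

theorem norm_mul_sq_lt_one {p y : K} (hp : 1 ≤ ‖p‖) (hy : ‖p * y‖ < 1) : ‖p * y ^ 2‖ < 1 :=
  calc ‖p * y ^ 2‖ = ‖p * y‖ * ‖y‖ := by rw [← norm_mul, sq, mul_assoc]
    _ ≤ ‖p * y‖ * ‖p * y‖ := by
      gcongr
      rw [norm_mul]
      exact le_mul_of_one_le_left (norm_nonneg y) hp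
    _ < 1 := mul_lt_one_of_nonneg_of_lt_one_left (norm_nonneg _) hy hy.le

end NormedDivisionRing

section NormedField

variable {K : Type*} [NormedField K] {p y : K}

theorem hasSum_seriesTerm_add (hp0 : p ≠ 0) (hp1 : p ≠ 1) (A : K) (hX : ‖(p * y) ^ 2‖ < 1)
    (hY : ‖p * y ^ 2‖ < 1) (m : ℕ) :
    HasSum (fun k : ℕ => seriesTerm p y A (k + m))
      (A ^ 2 * (p + 1) / (p - 1) * (((p * y) ^ 2) ^ m / (1 - (p * y) ^ 2)) +
        2 * A * (p - 1 - p * A) / (p - 1) * ((p * y ^ 2) ^ m / (1 - p * y ^ 2))) := by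
  simp_rw [seriesTerm_eq_add_pow hp0 hp1]
  exact ((hasSum_pow_add_of_norm_lt_one hX m).mul_left _).add
    ((hasSum_pow_add_of_norm_lt_one hY m).mul_left _)

theorem series_sums_to_Pp_general (hp0 : p ≠ 0) (hp1 : p ≠ 1) (ε : K) (hy : ‖p * y‖ < 1)
    (hY : ‖p * y ^ 2‖ < 1) :
    HasSum (fun k : ℕ =>
      (1 - ε / p) * p ^ (2 * (k + 2)) * y ^ (2 * (k + 2)) *
        ((1 - ε / p) +
          (2 * (1 - ε / p) / p) *
            ((1 - p ^ ((1 : ℤ) - ((k : ℤ) + 2))) / (1 - p⁻¹)) +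
          2 / p ^ (k + 2)))
      ((1 + (ε ^ 2 - 2 * ε + p - 2 * ε * p) * y ^ 2 + ε ^ 2 * p * y ^ 4) /
          ((1 - p * y ^ 2) * (1 - p ^ 2 * y ^ 2)) -
        (1 + p ^ 2 * y ^ 2 * (1 - ε / p) * ((1 - ε / p) + 2 / p))) := by
  have hX : ‖(p * y) ^ 2‖ < 1 := by
    rw [norm_pow]
    exact pow_lt_one₀ (norm_nonneg _) hy two_ne_zero
  have hX1 : (p * y) ^ 2 ≠ 1 := fun h => by simp [h] at hX
  have hY1 : p * y ^ 2 ≠ 1 := fun h => by simp [h] at hY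
  rw [← one_add_geometric_tails_eq hp0 hp1 ε hX1 hY1, add_sub_cancel_left]
  simpa only [seriesTerm, Nat.cast_add, Nat.cast_ofNat] using
    hasSum_seriesTerm_add hp0 hp1 (1 - ε / p) hX hY 2

end NormedField

/-- with `A = 1 − ε/p` and `|py| < 1`, the series
`1 + p²y²A(A + 2/p) + Σ_{k≥2} A p^{2k} y^{2k} [A + (2A/p)(1 − p^{1−k})/(1 − p⁻¹) + 2/p^k]`
converges to `P(y, ε)`. -/
theorem series_sums_to_Pp (p : ℝ) (hp : 1 < p) (ε : ℝ)
    (hε : ε = -1 ∨ ε = 0 ∨ ε = 1) (y : ℝ) (hy : |p * y| < 1) :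
    Summable (fun k : ℕ =>
      (1 - ε / p) * p ^ (2 * (k + 2)) * y ^ (2 * (k + 2)) *
        ((1 - ε / p) +
          (2 * (1 - ε / p) / p) *
            ((1 - p ^ ((1 : ℤ) - ((k : ℤ) + 2))) / (1 - p⁻¹)) +
          2 / p ^ (k + 2))) ∧
    1 + p ^ 2 * y ^ 2 * (1 - ε / p) * ((1 - ε / p) + 2 / p) +
        (∑' k : ℕ,
          (1 - ε / p) * p ^ (2 * (k + 2)) * y ^ (2 * (k + 2)) *
            ((1 - ε / p) +
              (2 * (1 - ε / p) / p) *
                ((1 - p ^ ((1 : ℤ) - ((k : ℤ) + 2))) / (1 - p⁻¹)) +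
              2 / p ^ (k + 2))) =
      Pp p y ε := by
  have h := series_sums_to_Pp_general (by positivity) hp.ne' ε hy
    (norm_mul_sq_lt_one (hp.le.trans (le_abs_self p)) hy)
  exact ⟨h.summable, by rw [h.tsum_eq, add_sub_cancel, Pp]⟩
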